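/- Let q ∈ [1, 2) and r ∈ [1, 2) be real exponents. For all δ, σ > 0 there exists a constant C_{δ,σ} > 0 (depending only on δ, σ, q, r) such that for every R > 0, every s, t with 3R/2 ≤ s < t ≤ 2R, every smooth vector field v : ℝ³ → ℝ³ and every smooth function θ : ℝ³ → ℝ, the quantity J₅ = (t−s)^{−1} ∫_{B_t∖B_s} |v| |θ − θ̄_R| dx satisfies J₅ ≤ δ ‖v‖²_{L^6(B_t∖B_R)} + σ ‖θ − θ̄_R‖²_{L^6(B_t∖B_R)} + C_{δ,σ} (t−s)^{−(6−q)(6−r)/(q(6−r)+r(6−q))} ‖v‖_{L^q(B_{2R}∖B_R)}^{2q(6−r)/(q(6−r)+r(6−q))} ‖θ − θ̄_R‖_{L^r(B_{2R}∖B_R)}^{2r(6−q)/(q(6−r)+r(6−q))} (the inequality interpreted in the extended nonnegative reals). -/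

import Mathlib

/-!
Write `α = 2q/(6-q)` and `β = 2r/(6-r)`, both in `(0, 1)`. These are the interpolation exponents for
which `1/2 = α/q + (1-α)/6 = β/r + (1-β)/6`, so Hölder's inequality with four factors gives
`∫ |v||w| ≤ ‖v‖_q^α ‖v‖_6^(1-α) ‖w‖_r^β ‖w‖_6^(1-β)` on every set (`lintegral_mul_le_interp`).
With weights `(1-α)/2`, `(1-β)/2`, `(α+β)/2`, which add up to `1`, Young's inequality
(`young_three`) splits this product, divided by `t - s`, into the two `L^6` terms and a remainder
`(t-s)^(-2/(α+β)) ‖v‖_q^(2α/(α+β)) ‖w‖_r^(2β/(α+β))`, whose exponents are those of the theorem.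
Finally the norms over `B_t ∖ B_s` are bounded by those over the larger sets.
-/


open MeasureTheory Metric Filter
open scoped ENNReal NNReal

noncomputable section

/-- Euclidean `ℝ³`. -/
abbrev E3 := EuclideanSpace ℝ (Fin 3)

/-- The annulus `B_{2R} \ B_R` centered at the origin. -/
def Ann (R : ℝ) : Set E3 := ball (0 : E3) (2 * R) \ ball (0 : E3) R

/-- Mean value of `θ` over the annulus `B_{2R} \ B_R`. -/
def thetaBar (θ : E3 → ℝ) (R : ℝ) : ℝ := ⨍ x in Ann R, θ x

/-- `L^p` norm (with real exponent `p`) of `f` over the set `s`, valued in `ℝ≥0∞`. -/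
def LpS {F : Type*} [NormedAddCommGroup F] (f : E3 → F) (p : ℝ) (s : Set E3) : ℝ≥0∞ :=
  eLpNorm f (ENNReal.ofReal p) (volume.restrict s)

theorem LpS_mono {F : Type*} [NormedAddCommGroup F] (f : E3 → F) (p : ℝ) {s t : Set E3}
    (h : s ⊆ t) : LpS f p s ≤ LpS f p t :=
  eLpNorm_mono_measure f (Measure.restrict_mono h le_rfl)

/-- An integral of `‖f‖ ^ p` to the power `a / p` is the `a`-th power of the `L^p` norm. -/
theorem lintegral_rpow_eq_LpS {F : Type*} [NormedAddCommGroup F] (f : E3 → F) {p a e : ℝ}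
    (hp : 0 < p) (he : e = a / p) (s : Set E3) :
    (∫⁻ x in s, ‖f x‖ₑ ^ p) ^ e = LpS f p s ^ a := by
  have h0 : ENNReal.ofReal p ≠ 0 := by simpa using hp
  rw [LpS, eLpNorm_eq_lintegral_rpow_enorm_toReal h0 ENNReal.ofReal_ne_top,
    ENNReal.toReal_ofReal hp.le, ← ENNReal.rpow_mul, he]
  congr 1
  ring

/-- Hölder's inequality combined with the interpolation of `L^2` between `L^q` (resp. `L^r`)
and `L^6`. -/
theorem lintegral_mul_le_interp {q r : ℝ} (hq : 1 ≤ q ∧ q < 2) (hr : 1 ≤ r ∧ r < 2)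
    (S : Set E3) (v : E3 → E3) (w : E3 → ℝ) (hv : Continuous v) (hw : Continuous w) :
    ∫⁻ x in S, ENNReal.ofReal (‖v x‖ * |w x|) ≤
      LpS v q S ^ (2 * q / (6 - q)) * LpS v 6 S ^ (1 - 2 * q / (6 - q)) *
        LpS w r S ^ (2 * r / (6 - r)) * LpS w 6 S ^ (1 - 2 * r / (6 - r)) := by
  obtain ⟨hq1, hq2⟩ := hq
  obtain ⟨hr1, hr2⟩ := hr
  have h6q : 0 < 6 - q := by linarith
  have h6r : 0 < 6 - r := by linarith
  have hα : 2 * q / (6 - q) ≤ 1 := by rw [div_le_one h6q]; linarith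
  have hβ : 2 * r / (6 - r) ≤ 1 := by rw [div_le_one h6r]; linarith
  set F : Fin 4 → E3 → ℝ≥0∞ := ![fun x => ‖v x‖ₑ ^ q, fun x => ‖v x‖ₑ ^ (6 : ℝ),
    fun x => ‖w x‖ₑ ^ r, fun x => ‖w x‖ₑ ^ (6 : ℝ)] with hF
  set p : Fin 4 → ℝ := ![2 / (6 - q), (1 - 2 * q / (6 - q)) / 6,
    2 / (6 - r), (1 - 2 * r / (6 - r)) / 6] with hp
  have hv' : Measurable fun x => ‖v x‖ₑ := hv.measurable.enorm
  have hw' : Measurable fun x => ‖w x‖ₑ := hw.measurable.enorm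
  have key := ENNReal.lintegral_prod_norm_pow_le (μ := volume.restrict S) Finset.univ
    (f := F) (p := p)
    (by
      intro i _
      fin_cases i
      · exact (hv'.pow_const q).aemeasurable
      · exact (hv'.pow_const 6).aemeasurable
      · exact (hw'.pow_const r).aemeasurable
      · exact (hw'.pow_const 6).aemeasurable)
    (by
      simp only [hp, Fin.sum_univ_four, Matrix.cons_val]
      field_simp
      ring)
    (by
      intro i _
      fin_cases i
      · exact div_nonneg (by norm_num) h6q.le
      · exact div_nonneg (sub_nonneg.2 hα) (by norm_num)
      · exact div_nonneg (by norm_num) h6r.le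
      · exact div_nonneg (sub_nonneg.2 hβ) (by norm_num))
  simp only [hp, hF, Fin.prod_univ_four, Matrix.cons_val] at key
  rw [lintegral_rpow_eq_LpS v (a := 2 * q / (6 - q)) (by linarith) (by field_simp),
    lintegral_rpow_eq_LpS v (by norm_num) rfl,
    lintegral_rpow_eq_LpS w (a := 2 * r / (6 - r)) (by linarith) (by field_simp),
    lintegral_rpow_eq_LpS w (by norm_num) rfl] at key
  refine le_trans (le_of_eq ?_) key
  refine lintegral_congr fun x => ?_
  have split (y : ℝ≥0∞) {k : ℝ} (h6k : 0 < 6 - k) (hk : 2 * k / (6 - k) ≤ 1) (hk0 : 0 ≤ k) :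
      (y ^ k) ^ (2 / (6 - k)) * (y ^ (6 : ℝ)) ^ ((1 - 2 * k / (6 - k)) / 6) = y := by
    rw [← ENNReal.rpow_mul, ← ENNReal.rpow_mul, ← ENNReal.rpow_add_of_nonneg]
    · convert ENNReal.rpow_one y using 2
      field_simp
      ring
    · positivity
    · have := sub_nonneg.2 hk
      positivity
  rw [split _ h6q hα (by linarith), mul_assoc, split _ h6r hβ (by linarith),
    ENNReal.ofReal_mul (norm_nonneg _), ofReal_norm, ← Real.norm_eq_abs, ofReal_norm]

/-- Weighted Young inequality without the (superfluous) weights on the right. -/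
theorem rpow_mul_three_le_add (x y z : ℝ≥0∞) {a b c : ℝ} (ha : 0 ≤ a) (hb : 0 ≤ b) (hc : 0 ≤ c)
    (h : a + b + c = 1) : x ^ a * y ^ b * z ^ c ≤ x + y + z := by
  have hx : x ≤ x + y + z := by rw [add_assoc]; exact le_self_add
  have hy : y ≤ x + y + z := by rw [add_right_comm]; exact le_add_self
  have hz : z ≤ x + y + z := le_add_self
  calc x ^ a * y ^ b * z ^ c
      ≤ (x + y + z) ^ a * (x + y + z) ^ b * (x + y + z) ^ c := by gcongr
    _ = x + y + z := by
      rw [← ENNReal.rpow_add_of_nonneg _ _ ha hb, ← ENNReal.rpow_add_of_nonneg _ _ (by positivity) hc,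
        h, ENNReal.rpow_one]

/-- Young's inequality with parameters `δ`, `σ`; the constant depends only on `δ`, `σ`, `α`, `β`. -/
theorem young_three {α β δ σ : ℝ} (hα0 : 0 < α) (hα : α ≤ 1) (hβ0 : 0 < β) (hβ : β ≤ 1)
    (hδ : 0 < δ) (hσ : 0 < σ) : ∃ C : ℝ, 0 < C ∧ ∀ τ : ℝ, 0 < τ → ∀ A B D E : ℝ≥0∞,
      ENNReal.ofReal τ⁻¹ * (B ^ α * A ^ (1 - α) * E ^ β * D ^ (1 - β)) ≤
        ENNReal.ofReal δ * A ^ 2 + ENNReal.ofReal σ * D ^ 2 +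
          ENNReal.ofReal C * ENNReal.ofReal (τ ^ (-(2 / (α + β)))) * B ^ (2 * α / (α + β)) *
            E ^ (2 * β / (α + β)) := by
  -- `C` is chosen so that `δ ^ ((1-α)/2) * σ ^ ((1-β)/2) * C ^ ((α+β)/2) = 1`.
  have hK : 0 < δ ^ ((1 - α) / 2) * σ ^ ((1 - β) / 2) := by positivity
  refine ⟨(δ ^ ((1 - α) / 2) * σ ^ ((1 - β) / 2)) ^ (-(2 / (α + β))), by positivity, ?_⟩
  intro τ hτ A B D E
  set K := δ ^ ((1 - α) / 2) * σ ^ ((1 - β) / 2) with hKdef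
  have hαβ : 0 < α + β := by positivity
  have h1 : 0 ≤ (1 - α) / 2 := by linarith
  have h2 : 0 ≤ (1 - β) / 2 := by linarith
  have h3 : 0 ≤ (α + β) / 2 := by linarith
  refine le_trans (le_of_eq ?_) (rpow_mul_three_le_add _ _ _ h1 h2 h3 (by ring))
  have hneg : -(2 / (α + β)) * ((α + β) / 2) = -1 := by field_simp
  have eC : ENNReal.ofReal (K ^ (-(2 / (α + β)))) ^ ((α + β) / 2) = ENNReal.ofReal K⁻¹ := by
    rw [ENNReal.ofReal_rpow_of_nonneg (by positivity) h3, ← Real.rpow_mul hK.le, hneg,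
      Real.rpow_neg_one]
  have eτ : ENNReal.ofReal (τ ^ (-(2 / (α + β)))) ^ ((α + β) / 2) = ENNReal.ofReal τ⁻¹ := by
    rw [ENNReal.ofReal_rpow_of_nonneg (by positivity) h3, ← Real.rpow_mul hτ.le, hneg,
      Real.rpow_neg_one]
  have eB : (B ^ (2 * α / (α + β))) ^ ((α + β) / 2) = B ^ α := by
    rw [← ENNReal.rpow_mul]; congr 1; field_simp
  have eE : (E ^ (2 * β / (α + β))) ^ ((α + β) / 2) = E ^ β := by
    rw [← ENNReal.rpow_mul]; congr 1; field_simp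
  have eA (y : ℝ≥0∞) (k : ℝ) : (y ^ 2) ^ ((1 - k) / 2) = y ^ (1 - k) := by
    rw [← ENNReal.rpow_natCast, ← ENNReal.rpow_mul]; congr 1; push_cast; ring
  have eK : ENNReal.ofReal (δ ^ ((1 - α) / 2)) * ENNReal.ofReal (σ ^ ((1 - β) / 2)) *
      ENNReal.ofReal K⁻¹ = 1 := by
    rw [← ENNReal.ofReal_mul (by positivity), ← ENNReal.ofReal_mul (by positivity), ← hKdef,
      mul_inv_cancel₀ hK.ne', ENNReal.ofReal_one]
  rw [ENNReal.mul_rpow_of_nonneg _ _ h1, ENNReal.mul_rpow_of_nonneg _ _ h2,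
    ENNReal.mul_rpow_of_nonneg _ _ h3, ENNReal.mul_rpow_of_nonneg _ _ h3,
    ENNReal.mul_rpow_of_nonneg _ _ h3, eC, eτ, eB, eE, eA, eA,
    ENNReal.ofReal_rpow_of_nonneg hδ.le h1, ENNReal.ofReal_rpow_of_nonneg hσ.le h2]
  calc ENNReal.ofReal τ⁻¹ * (B ^ α * A ^ (1 - α) * E ^ β * D ^ (1 - β))
      = (ENNReal.ofReal (δ ^ ((1 - α) / 2)) * ENNReal.ofReal (σ ^ ((1 - β) / 2)) *
          ENNReal.ofReal K⁻¹) *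
          (ENNReal.ofReal τ⁻¹ * (B ^ α * A ^ (1 - α) * E ^ β * D ^ (1 - β))) := by
        rw [eK, one_mul]
    _ = _ := by ring

theorem J5_estimate_i (q r : ℝ) (hq : 1 ≤ q ∧ q < 2) (hr : 1 ≤ r ∧ r < 2) :
    ∀ δ : ℝ, 0 < δ → ∀ σ : ℝ, 0 < σ → ∃ Cδσ : ℝ, 0 < Cδσ ∧
      ∀ R s t : ℝ, 0 < R → 3 * R / 2 ≤ s → s < t → t ≤ 2 * R →
      ∀ v : E3 → E3, ∀ θ : E3 → ℝ, ContDiff ℝ (⊤ : ℕ∞) v → ContDiff ℝ (⊤ : ℕ∞) θ →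
        ENNReal.ofReal ((t - s)⁻¹) *
          ∫⁻ x in ball (0 : E3) t \ ball (0 : E3) s,
            ENNReal.ofReal (‖v x‖ * |θ x - thetaBar θ R|)
        ≤ ENNReal.ofReal δ * LpS v 6 (ball (0 : E3) t \ ball (0 : E3) R) ^ 2
          + ENNReal.ofReal σ * LpS (fun x => θ x - thetaBar θ R) 6 (ball (0 : E3) t \ ball (0 : E3) R) ^ 2
          + ENNReal.ofReal Cδσ *
              ENNReal.ofReal ((t - s) ^ (-((6 - q) * (6 - r) / (q * (6 - r) + r * (6 - q))))) *
              LpS v q (Ann R) ^ (2 * q * (6 - r) / (q * (6 - r) + r * (6 - q))) *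
              LpS (fun x => θ x - thetaBar θ R) r (Ann R) ^ (2 * r * (6 - q) / (q * (6 - r) + r * (6 - q))) := by
  intro δ hδ σ hσ
  have h6q : 0 < 6 - q := by linarith
  have h6r : 0 < 6 - r := by linarith
  have hq0 : 0 < q := by linarith
  have hr0 : 0 < r := by linarith
  have hα : 2 * q / (6 - q) ≤ 1 := by rw [div_le_one h6q]; linarith
  have hβ : 2 * r / (6 - r) ≤ 1 := by rw [div_le_one h6r]; linarith
  have hD : 0 < q * (6 - r) + r * (6 - q) := by positivity
  have hsum : 2 * q / (6 - q) + 2 * r / (6 - r) =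
      2 * (q * (6 - r) + r * (6 - q)) / ((6 - q) * (6 - r)) := by
    field_simp
  have e1 : 2 / (2 * q / (6 - q) + 2 * r / (6 - r)) =
      (6 - q) * (6 - r) / (q * (6 - r) + r * (6 - q)) := by
    rw [hsum]; field_simp
  have e2 : 2 * (2 * q / (6 - q)) / (2 * q / (6 - q) + 2 * r / (6 - r)) =
      2 * q * (6 - r) / (q * (6 - r) + r * (6 - q)) := by
    rw [hsum]; field_simp
  have e3 : 2 * (2 * r / (6 - r)) / (2 * q / (6 - q) + 2 * r / (6 - r)) =
      2 * r * (6 - q) / (q * (6 - r) + r * (6 - q)) := by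
    rw [hsum]; field_simp
  obtain ⟨C, hC, hyoung⟩ := young_three (div_pos (by positivity) h6q) hα
    (div_pos (by positivity) h6r) hβ hδ hσ
  rw [e1, e2, e3] at hyoung
  refine ⟨C, hC, ?_⟩
  intro R s t hR hs hst ht v θ hv hθ
  have hsub1 : ball (0 : E3) t \ ball (0 : E3) s ⊆ ball (0 : E3) t \ ball (0 : E3) R :=
    Set.sdiff_subset_sdiff_right (ball_subset_ball (by linarith))
  have hsub2 : ball (0 : E3) t \ ball (0 : E3) s ⊆ Ann R :=
    Set.sdiff_subset_sdiff (ball_subset_ball ht) (ball_subset_ball (by linarith))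
  have hhol := lintegral_mul_le_interp hq hr (ball (0 : E3) t \ ball (0 : E3) s) v
    (fun x => θ x - thetaBar θ R) hv.continuous (hθ.continuous.sub continuous_const)
  refine le_trans ?_ (hyoung (t - s) (sub_pos.2 hst) _ _ _ _)
  refine mul_le_mul_right (hhol.trans ?_) _
  have := sub_nonneg.2 hα
  have := sub_nonneg.2 hβ
  gcongr
  · exact LpS_mono _ _ hsub2
  · exact LpS_mono _ _ hsub1
  · exact LpS_mono _ _ hsub2
  · exact LpS_mono _ _ hsub1
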